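/- arXiv:2109.15304 — 5 statements merged into one kernel-verified Lean document; each statement's English description precedes it below -/
import Mathlib

section
/- For every real number x > 0, the tail of the sine integral admits the absolutely convergent integral representation π/2 − Si(x) = ∫₀^∞ (p·sin x + cos x)/(p² + 1) · e^{−x p} dp. -/
/-!
Write `F x p = (p sin x + cos x) / (p² + 1) · e^{-xp}` and `G x = ∫ p in (0,∞), F x p`.
Since `|sin x| ≤ x` and `(x p + 1) e^{-xp} ≤ 1`, the integrand is dominated by `1 / (1 + p²)`
uniformly in `x ≥ 0` (`abs_siKernel_le`), so `G` is finite and continuous up to `x = 0`, where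
`G 0 = ∫ dp / (1 + p²) = π / 2`. For `x > 0`, the factor `p² + 1` cancels in
`∂F/∂x = -sin x · e^{-xp}`, whence `G' x = -sin x / x`. The fundamental theorem of calculus on
`[0, x]` then gives `-Si x = G x - π / 2`.
-/

open MeasureTheory Real

/-- The sine integral `Si x = ∫ t in 0..x, sin t / t`. -/
noncomputable def Si (x : ℝ) : ℝ := ∫ t in (0:ℝ)..x, Real.sin t / t

/-- The integrand of the representation, as a function of the parameter `x` and the integration
variable `p`. -/
noncomputable def siKernel (x p : ℝ) : ℝ :=
  (p * Real.sin x + Real.cos x) / (p ^ 2 + 1) * Real.exp (-x * p)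

lemma continuous_siKernel_right (x : ℝ) : Continuous (siKernel x) := by
  unfold siKernel
  exact (Continuous.div (by fun_prop) (by fun_prop) (fun p => by positivity)).mul (by fun_prop)

/-- The bound is uniform in `x ≥ 0`, which makes dominated convergence available at `x = 0`. -/
lemma abs_siKernel_le {x p : ℝ} (hx : 0 ≤ x) (hp : 0 ≤ p) :
    |siKernel x p| ≤ (1 + p ^ 2)⁻¹ := by
  have hxp : 0 ≤ x * p := mul_nonneg hx hp
  have hsin : |p * Real.sin x| ≤ x * p := by
    rw [abs_mul, abs_of_nonneg hp, mul_comm]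
    have h : |Real.sin x| ≤ |x| := Real.abs_sin_le_abs
    rw [abs_of_nonneg hx] at h
    exact mul_le_mul_of_nonneg_right h hp
  have hnum : |p * Real.sin x + Real.cos x| ≤ x * p + 1 :=
    (abs_add_le _ _).trans (add_le_add hsin (Real.abs_cos_le_one x))
  have hexp : (x * p + 1) * Real.exp (-x * p) ≤ 1 := by
    have h := Real.add_one_le_exp (x * p)
    calc (x * p + 1) * Real.exp (-x * p) ≤ Real.exp (x * p) * Real.exp (-x * p) := by gcongr
      _ = 1 := by rw [← Real.exp_add]; simp
  have hq : 0 < p ^ 2 + 1 := by positivity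
  calc |siKernel x p|
      = |p * Real.sin x + Real.cos x| * Real.exp (-x * p) * (1 + p ^ 2)⁻¹ := by
        rw [siKernel, abs_mul, abs_div, abs_of_pos hq, Real.abs_exp, add_comm (p ^ 2) 1]
        ring
    _ ≤ (x * p + 1) * Real.exp (-x * p) * (1 + p ^ 2)⁻¹ := by gcongr
    _ ≤ 1 * (1 + p ^ 2)⁻¹ := by gcongr
    _ = (1 + p ^ 2)⁻¹ := one_mul _

lemma integrableOn_siKernel {x : ℝ} (hx : 0 ≤ x) : IntegrableOn (siKernel x) (Set.Ioi 0) := by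
  refine Integrable.mono' integrable_inv_one_add_sq.integrableOn
    (continuous_siKernel_right x).aestronglyMeasurable ?_
  filter_upwards [ae_restrict_mem measurableSet_Ioi] with p hp
  exact abs_siKernel_le hx (le_of_lt hp)

lemma hasDerivAt_siKernel (x p : ℝ) :
    HasDerivAt (fun y => siKernel y p) (-Real.sin x * Real.exp (-x * p)) x := by
  have hq : p ^ 2 + 1 ≠ 0 := by positivity
  have h1 : HasDerivAt (fun y => (p * Real.sin y + Real.cos y) / (p ^ 2 + 1))
      ((p * Real.cos x + -Real.sin x) / (p ^ 2 + 1)) x :=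
    (((Real.hasDerivAt_sin x).const_mul p).add (Real.hasDerivAt_cos x)).div_const _
  have h2 : HasDerivAt (fun y => Real.exp (-y * p)) (Real.exp (-x * p) * (-1 * p)) x :=
    (((hasDerivAt_id x).neg).mul_const p).exp
  refine (h1.mul h2).congr_deriv ?_
  field_simp
  ring

lemma continuousOn_integral_siKernel :
    ContinuousOn (fun x => ∫ p in Set.Ioi (0:ℝ), siKernel x p) (Set.Ici 0) := by
  refine continuousOn_of_dominated (bound := fun p => (1 + p ^ 2)⁻¹)
    (fun x _ => (continuous_siKernel_right x).aestronglyMeasurable) (fun x hx => ?_)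
    integrable_inv_one_add_sq.integrableOn
    (ae_of_all _ fun p x _ => (hasDerivAt_siKernel x p).continuousAt.continuousWithinAt)
  filter_upwards [ae_restrict_mem measurableSet_Ioi] with p hp
  exact abs_siKernel_le hx (le_of_lt hp)

lemma hasDerivAt_integral_siKernel {x : ℝ} (hx : 0 < x) :
    HasDerivAt (fun y => ∫ p in Set.Ioi (0:ℝ), siKernel y p) (-(Real.sin x / x)) x := by
  have h := (hasDerivAt_integral_of_dominated_loc_of_deriv_le
    (μ := volume.restrict (Set.Ioi (0:ℝ))) (F := siKernel)
    (F' := fun y p => -Real.sin y * Real.exp (-y * p))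
    (bound := fun p => Real.exp (-(x / 2) * p)) (x₀ := x)
    (Ioi_mem_nhds (half_lt_self hx))
    (Filter.Eventually.of_forall fun y => (continuous_siKernel_right y).aestronglyMeasurable)
    (integrableOn_siKernel hx.le)
    (Continuous.aestronglyMeasurable (by fun_prop)) ?_
    (integrableOn_exp_mul_Ioi (by linarith) 0)
    (ae_of_all _ fun p y _ => hasDerivAt_siKernel y p)).2
  · refine h.congr_deriv ?_
    rw [integral_const_mul, integral_exp_mul_Ioi (by linarith)]
    simp [div_eq_mul_inv]
  · filter_upwards [ae_restrict_mem measurableSet_Ioi] with p hp y hy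
    have hp' : (0:ℝ) < p := hp
    have hy' : x / 2 < y := hy
    rw [norm_mul, norm_neg, Real.norm_eq_abs, Real.norm_eq_abs, Real.abs_exp]
    calc |Real.sin y| * Real.exp (-y * p) ≤ 1 * Real.exp (-y * p) := by
          gcongr; exact Real.abs_sin_le_one y
      _ ≤ Real.exp (-(x / 2) * p) := by rw [one_mul]; gcongr

lemma integral_siKernel_zero : ∫ p in Set.Ioi (0:ℝ), siKernel 0 p = Real.pi / 2 := by
  have h : siKernel 0 = fun p => (1 + p ^ 2)⁻¹ := by
    funext p
    simp [siKernel, add_comm]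
  rw [h, integral_Ioi_inv_one_add_sq]
  simp

lemma intervalIntegrable_sin_div (a b : ℝ) :
    IntervalIntegrable (fun t => Real.sin t / t) volume a b := by
  refine (Real.continuous_sinc.intervalIntegrable a b).congr_ae (ae_restrict_of_ae ?_)
  -- `sinc` differs from `sin t / t` only at `t = 0`, where the quotient is `0` instead of `1`.
  filter_upwards [Measure.ae_ne volume (0:ℝ)] with t ht
  exact Real.sinc_of_ne_zero ht

/-- For every real `x > 0`, the tail of the sine integral admits the absolutely
convergent integral representation
`π/2 − Si x = ∫ p in (0,∞), (p·sin x + cos x)/(p² + 1) · e^{−x p} dp`. -/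
theorem si_tail_integral_repr (x : ℝ) (hx : 0 < x) :
    IntegrableOn
      (fun p : ℝ => (p * Real.sin x + Real.cos x) / (p ^ 2 + 1) * Real.exp (-x * p))
      (Set.Ioi 0) volume ∧
    Real.pi / 2 - Si x =
      ∫ p in Set.Ioi (0:ℝ),
        (p * Real.sin x + Real.cos x) / (p ^ 2 + 1) * Real.exp (-x * p) := by
  refine ⟨integrableOn_siKernel hx.le, ?_⟩
  have h := intervalIntegral.integral_eq_sub_of_hasDerivAt_of_le hx.le
    (continuousOn_integral_siKernel.mono Set.Icc_subset_Ici_self)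
    (fun t ht => hasDerivAt_integral_siKernel ht.1) (intervalIntegrable_sin_div 0 x).neg
  rw [intervalIntegral.integral_neg, integral_siKernel_zero] at h
  change Real.pi / 2 - ∫ t in (0:ℝ)..x, Real.sin t / t = ∫ p in Set.Ioi (0:ℝ), siKernel x p
  linarith
end

section
/- For every real x > 0, one has (2/π)·(π/2 − Si(x/π)) + (2 − 2·cos(x/π))/x ≤ 6/x, where Si is the sine integral. -/
/-!
Put `y = x / π`. Multiplying by `π / 2`, the claim becomes `π / 2 ≤ Si y + (2 + cos y) / y`.
The right-hand side has derivative `-(2 + cos y) / y ^ 2 ≤ 0`, so it is antitone on `(0, ∞)`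
(`antitoneOn_Si_add`), and it suffices to know its limit along a sequence tending to infinity.

Along `Y n = (2 n + 1) π / 2` one has `Si (Y n) = ∫ u in 0..π/2, sin ((2 n + 1) u) / u`, while the
Dirichlet kernel satisfies `∫ u in 0..π/2, sin ((2 n + 1) u) / sin u = π / 2`
(`integral_dirichletKernel`). The function `1 / sin u - 1 / u` is bounded on `(0, π / 2]`, so by
the Riemann-Lebesgue lemma the difference of the two integrals tends to `0`, which gives
`Si (Y n) → π / 2` (`tendsto_Si`).
-/

open MeasureTheory Real

open Filter Topology

theorem Si_eq_integral_sinc (x : ℝ) : Si x = ∫ t in (0:ℝ)..x, sinc t := by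
  unfold Si
  -- The integrands differ only at `t = 0`, where `sin t / t` has the junk value `0`.
  apply intervalIntegral.integral_congr_ae
  filter_upwards [Measure.ae_ne volume (0:ℝ)] with t ht _
  rw [sinc_of_ne_zero ht]

theorem hasDerivAt_Si (x : ℝ) : HasDerivAt Si (sinc x) x := by
  have h : Si = fun x => ∫ t in (0:ℝ)..x, sinc t := funext Si_eq_integral_sinc
  rw [h]
  exact (continuous_sinc.integral_hasStrictDerivAt 0 x).hasDerivAt

theorem hasDerivAt_Si_add {y : ℝ} (hy : 0 < y) :
    HasDerivAt (fun y => Si y + (2 + cos y) / y) (-(2 + cos y) / y ^ 2) y := by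
  have h := (hasDerivAt_Si y).add
    (((hasDerivAt_cos y).const_add 2).div (hasDerivAt_id y) hy.ne')
  convert! h using 1
  rw [sinc_of_ne_zero hy.ne']
  simp only [id]
  field_simp
  ring

theorem antitoneOn_Si_add : AntitoneOn (fun y => Si y + (2 + cos y) / y) (Set.Ioi 0) := by
  apply antitoneOn_of_deriv_nonpos (convex_Ioi 0)
  · exact fun y hy => (hasDerivAt_Si_add hy).continuousAt.continuousWithinAt
  · rw [interior_Ioi]
    exact fun y hy => (hasDerivAt_Si_add hy).differentiableAt.differentiableWithinAt
  · rw [interior_Ioi]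
    intro y hy
    rw [(hasDerivAt_Si_add hy).deriv, neg_div]
    have := neg_one_le_cos y
    exact neg_nonpos.2 (div_nonneg (by linarith) (sq_nonneg y))

/-- The Dirichlet kernel as a cosine polynomial. -/
theorem dirichletKernel_eq (n : ℕ) {u : ℝ} (hu : sin u ≠ 0) :
    sin ((2 * n + 1) * u) / sin u = 1 + ∑ k ∈ Finset.range n, 2 * cos (2 * (k + 1) * u) := by
  induction n with
  | zero => simp [hu]
  | succ n ih =>
    rw [Finset.sum_range_succ, ← add_assoc, ← ih]
    have h1 : sin ((2 * ((n + 1 : ℕ) : ℝ) + 1) * u)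
        = sin (2 * (n + 1) * u) * cos u + cos (2 * (n + 1) * u) * sin u := by
      rw [← sin_add]; push_cast; ring_nf
    have h2 : sin ((2 * (n : ℝ) + 1) * u)
        = sin (2 * (n + 1) * u) * cos u - cos (2 * (n + 1) * u) * sin u := by
      rw [← sin_sub]; ring_nf
    rw [h1, h2]
    field_simp
    ring

theorem sin_pos_of_mem {u : ℝ} (hu : u ∈ Set.Ioc 0 (π / 2)) : 0 < sin u :=
  sin_pos_of_pos_of_lt_pi hu.1 (by linarith [hu.2, pi_pos])

theorem intervalIntegrable_dirichletKernel (n : ℕ) :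
    IntervalIntegrable (fun u => sin ((2 * n + 1) * u) / sin u) volume 0 (π / 2) := by
  have hc : Continuous fun u : ℝ => 1 + ∑ k ∈ Finset.range n, 2 * cos (2 * ((k:ℝ) + 1) * u) := by
    fun_prop
  refine (hc.intervalIntegrable 0 (π / 2)).congr fun u hu => ?_
  rw [Set.uIoc_of_le (by positivity)] at hu
  exact (dirichletKernel_eq n (sin_pos_of_mem hu).ne').symm

theorem integral_dirichletKernel (n : ℕ) :
    ∫ u in (0:ℝ)..(π / 2), sin ((2 * n + 1) * u) / sin u = π / 2 := by
  have h : ∫ u in (0:ℝ)..(π / 2), sin ((2 * n + 1) * u) / sin u =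
      ∫ u in (0:ℝ)..(π / 2), (1 + ∑ k ∈ Finset.range n, 2 * cos (2 * ((k:ℝ) + 1) * u)) := by
    apply intervalIntegral.integral_congr_ae
    refine Eventually.of_forall fun u hu => ?_
    rw [Set.uIoc_of_le (by positivity)] at hu
    exact dirichletKernel_eq n (sin_pos_of_mem hu).ne'
  rw [h, intervalIntegral.integral_add (by simp)
    (Continuous.intervalIntegrable (by fun_prop) _ _), intervalIntegral.integral_finsetSum
    fun k _ => Continuous.intervalIntegrable (by fun_prop) _ _]
  have hk : ∀ k : ℕ, ∫ u in (0:ℝ)..(π / 2), 2 * cos (2 * ((k:ℝ) + 1) * u) = 0 := by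
    intro k
    have hk0 : (2 * ((k:ℝ) + 1)) ≠ 0 := by positivity
    have hs : sin (2 * ((k:ℝ) + 1) * (π / 2)) = 0 := by
      rw [show 2 * ((k:ℝ) + 1) * (π / 2) = ((k + 1 : ℕ) : ℝ) * π by push_cast; ring]
      exact sin_nat_mul_pi _
    rw [intervalIntegral.integral_const_mul,
      intervalIntegral.integral_comp_mul_left (fun v => cos v) hk0, integral_cos, hs]
    simp
  simp [hk]

/-- The numerator of `1 / sin u - 1 / u = (u - sin u) / (u sin u)` is at most `u ^ 3 / 2`
(from `sin u ≥ u cos u`), and the denominator is at least `2 u ^ 2 / π`. -/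
theorem abs_inv_sin_sub_inv_le {u : ℝ} (hu : u ∈ Set.Ioc 0 (π / 2)) :
    |1 / sin u - 1 / u| ≤ π ^ 2 := by
  have hs := sin_pos_of_mem hu
  obtain ⟨h0, h1⟩ := hu
  have hlt : sin u < u := sin_lt h0
  have hcos : u * cos u ≤ sin u := by
    rcases h1.lt_or_eq with h | h
    · have hc : 0 < cos u := cos_pos_of_mem_Ioo ⟨by linarith, h⟩
      have := lt_tan h0 h
      rw [tan_eq_sin_div_cos, lt_div_iff₀ hc] at this
      exact this.le
    · rw [h]; simp
  have hj : 2 / π * u ≤ sin u := mul_le_sin h0.le h1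
  have hc2 := one_sub_sq_div_two_le_cos (x := u)
  have hnum : u - sin u ≤ u ^ 3 / 2 := by nlinarith
  have hpi := pi_pos
  have hj' : 2 * u ≤ π * sin u := by
    rw [div_mul_eq_mul_div, div_le_iff₀ hpi] at hj
    linarith
  rw [div_sub_div _ _ hs.ne' h0.ne', abs_of_nonneg (div_nonneg (by linarith) (by positivity)),
    div_le_iff₀ (by positivity)]
  have h3 : u ^ 3 / 2 ≤ u ^ 2 * π := by nlinarith [sq_nonneg u]
  have h4 : u ^ 2 * π ≤ π ^ 2 * (sin u * u) := by
    have := mul_le_mul_of_nonneg_left hj' (by positivity : 0 ≤ π * u)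
    nlinarith [mul_pos hpi (pow_pos h0 2)]
  linarith

/-- The Riemann-Lebesgue lemma at the frequencies `2 n + 1`, for the sine transform of
`1 / sin u - 1 / u` on `(0, π / 2]`. -/
theorem tendsto_integral_sin_mul :
    Tendsto (fun n : ℕ => ∫ u in (0:ℝ)..(π / 2), sin ((2 * n + 1) * u) * (1 / sin u - 1 / u))
      atTop (𝓝 0) := by
  set f : ℝ → ℂ := (Set.Ioc 0 (π / 2)).indicator fun u => ((1 / sin u - 1 / u : ℝ) : ℂ) with hf
  have hfint : Integrable f := by
    rw [hf, integrable_indicator_iff measurableSet_Ioc]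
    apply IntegrableOn.of_bound (C := π ^ 2) (by simp)
    · refine (ae_restrict_iff' measurableSet_Ioc).2 (Eventually.of_forall fun u hu => ?_)
      rw [Complex.norm_real, norm_eq_abs]
      exact abs_inv_sin_sub_inv_le hu
    · exact (by fun_prop : Measurable fun u : ℝ =>
        ((1 / sin u - 1 / u : ℝ) : ℂ)).aestronglyMeasurable
  -- The character is `exp (-2 π i v w)`, so frequency `2 n + 1` is `w = (2 n + 1) / (2 π)`.
  have hw : Tendsto (fun n : ℕ => (2 * (n:ℝ) + 1) / (2 * π)) atTop (cocompact ℝ) := by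
    refine Tendsto.mono_right ?_ atTop_le_cocompact
    apply Tendsto.atTop_div_const (by positivity)
    exact tendsto_atTop_add_const_right _ _
      (tendsto_natCast_atTop_atTop.const_mul_atTop (by norm_num))
  have hRL := (Real.tendsto_integral_exp_smul_cocompact f).comp hw
  have him := ((Complex.continuous_im.tendsto _).comp hRL).neg
  simp only [Complex.zero_im, neg_zero] at him
  refine him.congr fun n => ?_
  simp only [Function.comp_apply]
  have hchar : Integrable fun v : ℝ =>
      Real.fourierChar (-(v * ((2 * (n:ℝ) + 1) / (2 * π)))) • f v :=
    (Real.fourierIntegral_convergent_iff' (f := f) (ContinuousLinearMap.mul ℝ ℝ) _).2 hfint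
  rw [← Complex.imCLM_apply, ← Complex.imCLM.integral_comp_comm hchar, ← integral_neg,
    intervalIntegral.integral_of_le (by positivity), ← integral_indicator measurableSet_Ioc]
  congr 1
  ext v
  by_cases hv : v ∈ Set.Ioc 0 (π / 2)
  · have harg : 2 * π * -(v * ((2 * (n:ℝ) + 1) / (2 * π))) = -((2 * n + 1) * v) := by
      field_simp
    simp only [hf, Set.indicator_of_mem hv, Complex.imCLM_apply, Circle.smul_def, smul_eq_mul,
      fourierChar_apply, harg, Complex.im_mul_ofReal, Complex.exp_ofReal_mul_I_im, sin_neg]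
    ring
  · simp [hf, Set.indicator_of_notMem hv]

/-- Substitution `t = (2 n + 1) u` in the sine integral. -/
theorem Si_odd_mul_pi_div_two (n : ℕ) :
    Si ((2 * n + 1) * (π / 2)) = ∫ u in (0:ℝ)..(π / 2), sin ((2 * n + 1) * u) / u := by
  have hn : (2 * (n:ℝ) + 1) ≠ 0 := by positivity
  have h := intervalIntegral.mul_integral_comp_mul_left (a := 0) (b := π / 2)
    (f := fun t => sin t / t) (2 * (n:ℝ) + 1)
  rw [mul_zero] at h
  rw [Si, ← h, ← intervalIntegral.integral_const_mul]
  congr 1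
  ext u
  rcases eq_or_ne u 0 with rfl | hu
  · simp
  · field_simp

theorem intervalIntegrable_sin_mul_div (n : ℕ) :
    IntervalIntegrable (fun u => sin ((2 * n + 1) * u) / u) volume 0 (π / 2) := by
  have hn : (2 * (n:ℝ) + 1) ≠ 0 := by positivity
  have hc : Continuous fun u : ℝ => (2 * (n:ℝ) + 1) * sinc ((2 * n + 1) * u) :=
    continuous_const.mul (continuous_sinc.comp (by fun_prop))
  refine (hc.intervalIntegrable 0 (π / 2)).congr fun u hu => ?_
  rw [Set.uIoc_of_le (by positivity)] at hu
  have hu0 : u ≠ 0 := hu.1.ne'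
  simp only [sinc_of_ne_zero (mul_ne_zero hn hu0)]
  field_simp

theorem tendsto_Si : Tendsto (fun n : ℕ => Si ((2 * n + 1) * (π / 2))) atTop (𝓝 (π / 2)) := by
  have h := tendsto_integral_sin_mul.const_sub (π / 2)
  rw [sub_zero] at h
  refine h.congr fun n => ?_
  have heq : ∫ u in (0:ℝ)..(π / 2), sin ((2 * n + 1) * u) * (1 / sin u - 1 / u) =
      (∫ u in (0:ℝ)..(π / 2), sin ((2 * n + 1) * u) / sin u)
        - ∫ u in (0:ℝ)..(π / 2), sin ((2 * n + 1) * u) / u := by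
    rw [← intervalIntegral.integral_sub (intervalIntegrable_dirichletKernel n)
      (intervalIntegrable_sin_mul_div n)]
    congr 1
    ext u
    ring
  rw [heq, integral_dirichletKernel, Si_odd_mul_pi_div_two]
  ring

theorem pi_div_two_le_Si_add {y : ℝ} (hy : 0 < y) : π / 2 ≤ Si y + (2 + cos y) / y := by
  have hY : Tendsto (fun n : ℕ => (2 * (n:ℝ) + 1) * (π / 2)) atTop atTop :=
    (tendsto_atTop_add_const_right _ _
      (tendsto_natCast_atTop_atTop.const_mul_atTop (by norm_num))).atTop_mul_const
      (by positivity)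
  refine le_of_tendsto tendsto_Si ?_
  filter_upwards [hY.eventually_ge_atTop y] with n hn
  have hpos : 0 < (2 * (n:ℝ) + 1) * (π / 2) := hy.trans_le hn
  have hanti := antitoneOn_Si_add hy hpos hn
  have hnn : 0 ≤ (2 + cos ((2 * (n:ℝ) + 1) * (π / 2))) / ((2 * (n:ℝ) + 1) * (π / 2)) :=
    div_nonneg (by linarith [neg_one_le_cos ((2 * (n:ℝ) + 1) * (π / 2))]) hpos.le
  simp only at hanti
  linarith

/-- For every real `x > 0`,
`(2/π)·(π/2 − Si(x/π)) + (2 − 2·cos(x/π))/x ≤ 6/x`. -/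
theorem triangular_tail_bound (x : ℝ) (hx : 0 < x) :
    2 / Real.pi * (Real.pi / 2 - Si (x / Real.pi)) +
      (2 - 2 * Real.cos (x / Real.pi)) / x ≤ 6 / x := by
  have hpi := pi_pos
  have h := pi_div_two_le_Si_add (div_pos hx hpi)
  have h2 : 2 / π * (π / 2 - Si (x / π)) ≤ 2 / π * ((2 + cos (x / π)) / (x / π)) :=
    mul_le_mul_of_nonneg_left (by linarith) (by positivity)
  have h3 : 2 / π * ((2 + cos (x / π)) / (x / π)) + (2 - 2 * cos (x / π)) / x = 6 / x := by
    field_simp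
    ring
  linarith
end

section
/- For every real x, the Fourier transform of the hyperbolic secant satisfies ∫_ℝ cos(x h)/cosh(h) dh = π/cosh(π·x/2). -/
open MeasureTheory Real

/-!
The substitution `t = sigmoid (2h) = e^h / (2 cosh h)`, for which
`1 - t = e^{-h} / (2 cosh h)` and `dt = 2 t (1 - t) dh`, maps `ℝ` bijectively onto `(0, 1)` and
turns the Beta integral `B(u, 1 - u) = ∫₀¹ t^(u-1) (1-t)^(-u) dt` at `u = (1 + i x) / 2` into
`∫ e^{i x h} / cosh h dh`. Euler's reflection formula evaluates it as
`Γ(u) Γ(1 - u) = π / sin (π u) = π / cosh (π x / 2)`, and the claim is the real part of this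
identity. Convergence of the Beta integral provides the integrability needed to take real parts.
-/

/-- The Beta integrand, transported by `t = sigmoid (2h)` and multiplied by the Jacobian
`2 t (1 - t)`, is `e^{i x h} / cosh h`. -/
lemma beta_integrand_sigmoid (x h : ℝ) :
    |2 * (sigmoid (2 * h) * (1 - sigmoid (2 * h)))| •
      (((sigmoid (2 * h) : ℝ) : ℂ) ^ ((1 + x * Complex.I) / 2 - 1) *
        (1 - ((sigmoid (2 * h) : ℝ) : ℂ)) ^ ((1 - (1 + x * Complex.I) / 2) - 1)) =
      Complex.exp (x * h * Complex.I) / (Real.cosh h : ℂ) := by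
  have hc : 0 < 2 * Real.cosh h := by have := Real.cosh_pos h; positivity
  have hc' : (2 * Real.cosh h) = rexp h + rexp (-h) := by rw [Real.cosh_eq]; ring
  -- With `L = log (2 cosh h)`, every factor is the exponential of an explicit exponent.
  obtain ⟨L, hL⟩ : ∃ L, rexp L = 2 * Real.cosh h := ⟨_, Real.exp_log hc⟩
  have h1 : sigmoid (2 * h) = rexp (h - L) := by
    rw [sigmoid_def, Real.exp_sub, hL, hc', show -(2 * h) = -h - h by ring, Real.exp_sub]
    have := Real.exp_pos h
    field_simp
  have h2 : 1 - sigmoid (2 * h) = rexp (-h - L) := by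
    rw [h1, Real.exp_sub, Real.exp_sub, hL, hc']
    have := Real.exp_pos h
    have := Real.exp_pos (-h)
    field_simp
    ring
  have hpow (a : ℝ) (w : ℂ) : ((rexp a : ℝ) : ℂ) ^ w = Complex.exp (a * w) := by
    rw [Complex.cpow_def_of_ne_zero (by exact_mod_cast (Real.exp_pos a).ne'),
      ← Complex.ofReal_log (Real.exp_pos a).le, Real.log_exp]
  have h2' : (1 - ((sigmoid (2 * h) : ℝ) : ℂ)) = ((rexp (-h - L) : ℝ) : ℂ) := by
    rw [← h2]; push_cast; rfl
  have hcosh : (Real.cosh h : ℂ) = Complex.exp L / 2 := by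
    rw [← Complex.ofReal_exp, hL]; push_cast; ring
  rw [h2', h2, h1, hpow, hpow, abs_of_pos (by positivity), hcosh, Complex.real_smul]
  push_cast
  rw [div_div_eq_mul_div, mul_comm (Complex.exp (x * h * Complex.I)) 2, mul_div_assoc,
    ← Complex.exp_sub, mul_assoc, ← Complex.exp_add, ← Complex.exp_add, ← Complex.exp_add]
  congr 2
  ring

theorem hasDerivAt_sigmoid_two_mul (h : ℝ) :
    HasDerivAt (fun h : ℝ => sigmoid (2 * h))
      (2 * (sigmoid (2 * h) * (1 - sigmoid (2 * h)))) h := by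
  have h2 : HasDerivAt (fun h : ℝ => 2 * h) 2 h := by
    simpa using (hasDerivAt_id h).const_mul (2 : ℝ)
  exact ((hasDerivAt_sigmoid (2 * h)).comp h h2).congr_deriv (mul_comm _ _)

theorem image_sigmoid_two_mul :
    (fun h : ℝ => sigmoid (2 * h)) '' Set.univ = Set.Ioo 0 1 := by
  rw [Set.image_univ, ← range_sigmoid]
  exact (mul_left_surjective₀ (two_ne_zero (α := ℝ))).range_comp sigmoid

/-- The complex form of the transform, together with integrability. -/
theorem integrable_and_integral_exp_div_cosh (x : ℝ) :
    Integrable (fun h : ℝ => Complex.exp (x * h * Complex.I) / (Real.cosh h : ℂ)) ∧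
    ∫ h : ℝ, Complex.exp (x * h * Complex.I) / (Real.cosh h : ℂ) =
      ((Real.pi / Real.cosh (Real.pi * x / 2) : ℝ) : ℂ) := by
  set u : ℂ := (1 + x * Complex.I) / 2 with hu
  have hu0 : 0 < u.re := by simp [hu]
  have hv0 : 0 < (1 - u).re := by simp [hu]; norm_num
  have hderiv : ∀ h ∈ (Set.univ : Set ℝ), HasDerivWithinAt (fun h : ℝ => sigmoid (2 * h))
      (2 * (sigmoid (2 * h) * (1 - sigmoid (2 * h)))) Set.univ h :=
    fun h _ => (hasDerivAt_sigmoid_two_mul h).hasDerivWithinAt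
  have hinj : Set.InjOn (fun h : ℝ => sigmoid (2 * h)) Set.univ := by
    intro a _ b _ hab
    simpa using sigmoid_injective hab
  constructor
  · have hB := Complex.betaIntegral_convergent hu0 hv0
    rw [intervalIntegrable_iff_integrableOn_Ioo_of_le zero_le_one, ← image_sigmoid_two_mul,
      integrableOn_image_iff_integrableOn_abs_deriv_smul MeasurableSet.univ hderiv hinj,
      integrableOn_univ] at hB
    simpa only [hu, beta_integrand_sigmoid] using hB
  · have hB : Complex.betaIntegral u (1 - u) =
        ∫ h : ℝ, Complex.exp (x * h * Complex.I) / (Real.cosh h : ℂ) := by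
      rw [Complex.betaIntegral, intervalIntegral.integral_of_le zero_le_one,
        integral_Ioc_eq_integral_Ioo, ← image_sigmoid_two_mul,
        integral_image_eq_integral_abs_deriv_smul MeasurableSet.univ hderiv hinj,
        setIntegral_univ]
      simp only [hu, beta_integrand_sigmoid]
    have hG := Complex.Gamma_mul_Gamma_eq_betaIntegral hu0 hv0
    rw [add_sub_cancel, Complex.Gamma_one, one_mul, Complex.Gamma_mul_Gamma_one_sub] at hG
    rw [← hB, ← hG]
    push_cast
    rw [← Complex.cos_mul_I, ← Complex.sin_add_pi_div_two]
    congr 2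
    rw [hu]
    ring

/-- The Fourier transform of the hyperbolic secant: for every real `x`,
`∫_ℝ cos(x h)/cosh(h) dh = π/cosh(π·x/2)`. -/
theorem fourier_sech (x : ℝ) :
    ∫ h : ℝ, Real.cos (x * h) / Real.cosh h =
      Real.pi / Real.cosh (Real.pi * x / 2) := by
  obtain ⟨hint, heq⟩ := integrable_and_integral_exp_div_cosh x
  have hre := integral_re hint
  rw [heq] at hre
  rw [← Complex.ofReal_re (Real.pi / Real.cosh (Real.pi * x / 2))]
  refine Eq.trans ?_ hre
  congr 1
  ext h
  rw [RCLike.re_eq_complex_re, Complex.div_ofReal_re, ← Complex.ofReal_mul,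
    Complex.exp_ofReal_mul_I_re]
end

section
/- Let n ∈ ℕ, E : Fin n → ℝ, and p : Fin n → ℝ with p i ≥ 0 for all i and ∑_i p i = 1. Let j : Fin n and Δ > 0 satisfy |E i − E j| ≥ Δ for all i ≠ j. Let g : ℝ → ℝ be an even function with 0 ≤ g(h) ≤ 1 for all h and g(h') ≤ g(h) whenever 0 ≤ h ≤ h'. Let τ > 0, ε ∈ (0, 1], and E' ∈ ℝ satisfy |E' − E j| ≤ Δ/2 and g(τ·Δ/2) ≤ ε/2. Then |∑_i p i · g(τ·(E i − E'))² − p j · g(τ·(E' − E j))²| ≤ ε. -/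
/-! The `j`-th term of the sum equals `p j * g (τ * (E' - E j)) ^ 2` because `g` is even, so the
difference is the sum over `i ≠ j`. For these `i` the gap gives `|E i - E'| ≥ Δ - Δ / 2 = Δ / 2`,
hence `g (τ * (E i - E')) ≤ g (τ * Δ / 2) ≤ ε / 2` by evenness and monotonicity. The remaining sum
is therefore between `0` and `∑ i, p i * ε = ε`, since `(ε / 2) ^ 2 ≤ ε` for `0 < ε ≤ 1`. -/

/-- Finite imaginary time error bound for the normalization factor
`D_τ(E') = ∑_i p_i g(τ(E_i − E'))²`. -/
theorem normalization_finite_tau (n : ℕ) (E p : Fin n → ℝ)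
    (hp0 : ∀ i, 0 ≤ p i) (hpsum : ∑ i, p i = 1)
    (j : Fin n) (Δ : ℝ) (hΔ : 0 < Δ)
    (hgap : ∀ i, i ≠ j → |E i - E j| ≥ Δ)
    (g : ℝ → ℝ) (hgeven : ∀ h : ℝ, g (-h) = g h)
    (hg0 : ∀ h : ℝ, 0 ≤ g h) (hg1 : ∀ h : ℝ, g h ≤ 1)
    (hganti : ∀ h h' : ℝ, 0 ≤ h → h ≤ h' → g h' ≤ g h)
    (τ : ℝ) (hτ : 0 < τ) (ε : ℝ) (hε0 : 0 < ε) (hε1 : ε ≤ 1)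
    (E' : ℝ) (hE' : |E' - E j| ≤ Δ / 2)
    (hcool : g (τ * Δ / 2) ≤ ε / 2) :
    |(∑ i, p i * g (τ * (E i - E')) ^ 2) - p j * g (τ * (E' - E j)) ^ 2| ≤ ε := by
  have hterm : g (τ * (E j - E')) = g (τ * (E' - E j)) := by
    rw [← hgeven]
    congr 1
    ring
  have hsplit := Finset.add_sum_erase Finset.univ
    (fun i => p i * g (τ * (E i - E')) ^ 2) (Finset.mem_univ j)
  simp only [hterm] at hsplit
  rw [← hsplit, add_sub_cancel_left, abs_of_nonneg
    (Finset.sum_nonneg fun i _ => mul_nonneg (hp0 i) (sq_nonneg _))]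
  have hsmall : ∀ i, i ≠ j → g (τ * (E i - E')) ^ 2 ≤ ε := by
    intro i hi
    have hdist : Δ / 2 ≤ |E i - E'| := by
      have := abs_sub_le (E i) E' (E j)
      linarith [hgap i hi]
    have habs : g (τ * (E i - E')) = g (τ * |E i - E'|) := by
      rcases abs_choice (E i - E') with h | h <;> rw [h]
      rw [mul_neg, hgeven]
    have hle : g (τ * (E i - E')) ≤ ε / 2 := by
      rw [habs]
      refine (hganti (τ * Δ / 2) _ (by positivity) ?_).trans hcool
      rw [mul_div_assoc]
      gcongr
    have hsq := pow_le_pow_left₀ (hg0 (τ * (E i - E'))) hle 2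
    nlinarith
  calc ∑ i ∈ Finset.univ.erase j, p i * g (τ * (E i - E')) ^ 2
      ≤ ∑ i ∈ Finset.univ.erase j, p i * ε := Finset.sum_le_sum fun i hi =>
        mul_le_mul_of_nonneg_left (hsmall i (Finset.ne_of_mem_erase hi)) (hp0 i)
    _ ≤ ∑ i, p i * ε := Finset.sum_le_sum_of_subset_of_nonneg (Finset.erase_subset _ _)
        fun i _ _ => mul_nonneg (hp0 i) hε0.le
    _ = ε := by rw [← Finset.sum_mul, hpsum, one_mul]
end

section
/- Let p : ℝ → ℝ be a measurable, nonnegative, Lebesgue-integrable function with ∫_ℝ p = 1, and define its correlation p̃(y) := ∫_ℝ p(t + y)·p(t) dt. Let F : ℝ → ℂ be measurable with ‖F(y)‖ ≤ 1 for all y, and let a > 0. Then p̃·F is integrable and ‖∫_ℝ p̃(y)·F(y) dy − ∫_{−a}^{a} p̃(y)·F(y) dy‖ ≤ 1 − (∫_{−a/2}^{a/2} p(x) dx)². -/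
/-!
Since `p̃` is nonnegative with total mass `1` and `‖F‖ ≤ 1`, the truncation error is at most
`∫_{|y| > a} p̃ = 1 - ∫_{-a}^{a} p̃`. The shear `(t, y) ↦ (t, t + y)` preserves Lebesgue measure
on `ℝ²`, so by Fubini `∫_{-a}^{a} p̃` is the integral of `p(t) p(x)` over the strip
`x - t ∈ (-a, a]`. This strip contains the square `(-a/2, a/2]²`, on which the integral is
`(∫_{-a/2}^{a/2} p)²`: two samples that both lie within `a/2` of the origin differ by less
than `a`.
-/

open MeasureTheory

lemma integrable_shear {p : ℝ → ℝ} (hpint : Integrable p volume) :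
    Integrable (fun z : ℝ × ℝ => p (z.1 + z.2) * p z.1) (volume.prod volume) := by
  have h := (measurePreserving_prod_add (volume : Measure ℝ) (volume : Measure ℝ)
    ).integrable_comp_of_integrable (hpint.mul_prod hpint)
  refine h.congr (Filter.Eventually.of_forall fun z => ?_)
  simp [mul_comm]

/-- Fubini and the shear `(t, y) ↦ (t, t + y)` turn an integral of the correlation over a set `s`
of differences into an integral of `p ⊗ p` over the pairs whose difference lies in `s`. -/
lemma setIntegral_correlation {p : ℝ → ℝ} (hpint : Integrable p volume)
    (s : Set ℝ) :
    ∫ y in s, ∫ t, p (t + y) * p t =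
      ∫ z in {z : ℝ × ℝ | z.2 - z.1 ∈ s}, p z.1 * p z.2 ∂(volume.prod volume) := by
  have hmp := measurePreserving_prod_add (volume : Measure ℝ) (volume : Measure ℝ)
  have h1 := hmp.setIntegral_preimage_emb
    (MeasurableEquiv.shearAddRight ℝ).measurableEmbedding
    (fun z => p z.1 * p z.2) {z : ℝ × ℝ | z.2 - z.1 ∈ s}
  rw [← h1]
  have h2 : (fun z : ℝ × ℝ => (z.1, z.1 + z.2)) ⁻¹' {z : ℝ × ℝ | z.2 - z.1 ∈ s}
      = Set.univ ×ˢ s := by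
    ext z
    simp
  rw [h2, ← Measure.prod_restrict, Measure.restrict_univ, integral_prod_symm]
  · simp only [mul_comm]
  · have hK' := (integrable_shear hpint).integrableOn (s := Set.univ ×ˢ s)
    rw [IntegrableOn, ← Measure.prod_restrict, Measure.restrict_univ] at hK'
    refine hK'.congr (Filter.Eventually.of_forall fun z => ?_)
    simp [mul_comm]

theorem normalization_truncation_bound (p : ℝ → ℝ)
    (hpmeas : Measurable p) (hp0 : ∀ x, 0 ≤ p x)
    (hpint : Integrable p volume) (hpnorm : ∫ x, p x = 1)
    (ptilde : ℝ → ℝ) (hptilde : ∀ y, ptilde y = ∫ t, p (t + y) * p t)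
    (F : ℝ → ℂ) (hFmeas : Measurable F) (hFbound : ∀ y, ‖F y‖ ≤ 1)
    (a : ℝ) (ha : 0 < a) :
    Integrable (fun y => (ptilde y : ℂ) * F y) volume ∧
    ‖(∫ y : ℝ, (ptilde y : ℂ) * F y) -
        ∫ y in (-a)..a, (ptilde y : ℂ) * F y‖ ≤
      1 - (∫ x in (-(a / 2))..(a / 2), p x) ^ 2 := by
  obtain rfl : ptilde = fun y => ∫ t, p (t + y) * p t := funext hptilde
  set q : ℝ → ℝ := fun y => ∫ t, p (t + y) * p t with hq
  have hq0 : ∀ y, 0 ≤ q y := fun y => integral_nonneg fun t => mul_nonneg (hp0 _) (hp0 _)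
  have hqint : Integrable q volume := (integrable_shear hpint).integral_prod_right
  have hint : Integrable (fun y => (q y : ℂ) * F y) volume :=
    hqint.ofReal.mul_bdd hFmeas.aestronglyMeasurable (Filter.Eventually.of_forall hFbound)
  refine ⟨hint, ?_⟩
  have hsplit := integral_add_compl (measurableSet_Ioc (a := -a) (b := a)) hint
  have hqsplit := integral_add_compl (measurableSet_Ioc (a := -a) (b := a)) hqint
  have hqone : ∫ y, q y = 1 := by
    have h := setIntegral_correlation hpint Set.univ
    simp only [Set.mem_univ, Set.ofPred_true, setIntegral_univ] at h
    rw [hq, h, integral_prod_mul, hpnorm, one_mul]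
  have hsq : (∫ x in (-(a / 2))..(a / 2), p x) ^ 2 ≤ ∫ y in Set.Ioc (-a) a, q y := by
    rw [hq, setIntegral_correlation hpint,
      intervalIntegral.integral_of_le (by linarith), sq, ← setIntegral_prod_mul]
    refine setIntegral_mono_set (hpint.mul_prod hpint).integrableOn
      (Filter.Eventually.of_forall fun z => mul_nonneg (hp0 _) (hp0 _))
      (LE.le.eventuallyLE ?_)
    rintro ⟨t, x⟩ ⟨⟨h1, h2⟩, h3, h4⟩
    simp only at h1 h2 h3 h4
    constructor <;> simp only <;> linarith
  rw [intervalIntegral.integral_of_le (by linarith), ← hsplit, add_sub_cancel_left]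
  have htail : ‖∫ y in (Set.Ioc (-a) a)ᶜ, (q y : ℂ) * F y‖ ≤ ∫ y in (Set.Ioc (-a) a)ᶜ, q y := by
    refine norm_integral_le_of_norm_le hqint.integrableOn (Filter.Eventually.of_forall fun y => ?_)
    rw [norm_mul, Complex.norm_real, Real.norm_of_nonneg (hq0 y)]
    exact mul_le_of_le_one_right (hq0 y) (hFbound y)
  linarith
end
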